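/- arXiv:1911.11604 — 2 statements merged into one kernel-verified Lean document; each statement's English description precedes it below -/
import Mathlib

section
/- Let u ∈ E be differentially transcendental over F and let P, Q ∈ F{u} be nonzero coprime differential polynomials with m := max(ord P, ord Q) ≥ 0. Set R := P(u)/Q(u) ∈ E. Then the transcendence degree of the field F⟨{u}⟩ over its subfield F⟨{R}⟩ equals m. -/
/-!
Write `u_k` for the `k`-th derivative of `u`, `E_n = F(u_0, …, u_{n-1})`, and `R = P(u)/Q(u)`.
A transcendence basis of `F⟨u⟩` over `F⟨R⟩` is `u_0, …, u_{m-1}`. The point is that the sequence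
`w = (u_0, …, u_{m-1}, R, DR, D²R, …)` is triangular with respect to `(u_k)`: for every `n`,
`w_n ∈ E_{n+1}`, and `u_n` is algebraic over `E_n(w_n)`. By the exchange property of algebraic
dependence (`triangular`), `w` is then a transcendence basis of `F⟨u⟩` over `F`, and splitting it
into its first `m` terms and the generators of `F⟨R⟩` gives the claim (`basis_of_sum`).

Triangularity rests on the separant-like polynomial `W = ∂P/∂u_m · Q - P · ∂Q/∂u_m`, which is
nonzero because `P`, `Q` are coprime, `u_m` occurs in one of them and the characteristic is zero
(`wronskian_ne_zero`). For `n = m`, it shows that `u_m` is a root of the nonzero polynomial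
`P(T) - R Q(T)` over `E_m(R)` (`isAlgebraic_top`). For `n = m + k` with `k ≥ 1`, one has
`D^k R = S u_{m+k} + (an element of E_{m+k})` with `S = W(u)/Q(u)²` independent of `k`
(`iterate_succ_quotient`), so even `u_n ∈ E_n(w_n)`.
-/

open MvPolynomial

noncomputable section

namespace DiffCurve

variable (F : Type*) {E : Type*} [Field F] [Field E] [Algebra F E]

/-- `F⟨S⟩`: the intermediate field of `E/F` generated by all iterated derivatives of
elements of `S`. -/
def genDF (D : Derivation ℤ E E) (S : Set E) : IntermediateField F E :=
  IntermediateField.adjoin F {x | ∃ s ∈ S, ∃ k : ℕ, (⇑D)^[k] s = x}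

/-- `u` is differentially transcendental over `F`. -/
def DiffTrans (D : Derivation ℤ E E) (u : E) : Prop :=
  AlgebraicIndependent F (fun k : ℕ => (⇑D)^[k] u)

/-- Evaluation of `P ∈ F{u}` at `v`: the `F`-algebra map sending `u_k ↦ D^k v`. -/
def evalD (D : Derivation ℤ E E) (v : E) : MvPolynomial ℕ F →ₐ[F] E :=
  aeval fun k => (⇑D)^[k] v

/-- Evaluation of `A ∈ F{x,y}` at `(η₁, η₂)`: `x_k ↦ D^k η₁`, `y_k ↦ D^k η₂`. -/
def evalD2 (D : Derivation ℤ E E) (η₁ η₂ : E) : MvPolynomial (Fin 2 × ℕ) F →ₐ[F] E :=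
  aeval fun p => (⇑D)^[p.2] (if p.1 = 0 then η₁ else η₂)

variable {F}

/-- The order of `P ∈ F{u}`: the largest `k` such that `u_k` occurs (`⊥` if none). -/
def ordU (P : MvPolynomial ℕ F) : WithBot ℕ := P.vars.max

/-- `ord_x` (for `i = 0`) resp. `ord_y` (for `i = 1`) of `A ∈ F{x,y}`. -/
def ordIdx (i : Fin 2) (A : MvPolynomial (Fin 2 × ℕ) F) : WithBot ℕ :=
  ((A.vars.filter fun v => v.1 = i).image Prod.snd).max

/-- `ord(A) = max(ord_x A, ord_y A)`. -/
def ordXY (A : MvPolynomial (Fin 2 × ℕ) F) : WithBot ℕ :=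
  max (ordIdx 0 A) (ordIdx 1 A)

/-- The separant of `A` w.r.t. `x`: `∂A/∂x_s` where `s = ord_x A` (junk value `1` if
`ord_x A = ⊥`). -/
def sepX (A : MvPolynomial (Fin 2 × ℕ) F) : MvPolynomial (Fin 2 × ℕ) F :=
  WithBot.recBotCoe 1 (fun s => pderiv ((0 : Fin 2), s) A) (ordIdx 0 A)

/-- The differential ideal `[A]` generated by `A`, for a derivation `d`. -/
def diffIdeal {R : Type*} [CommRing R] (d : Derivation ℤ R R) (A : R) : Ideal R :=
  Ideal.span (Set.range fun k : ℕ => (⇑d)^[k] A)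

/-- The general component `sat(A) = [A] : S_A^∞` (as a set). -/
def satSet (dxy : Derivation ℤ (MvPolynomial (Fin 2 × ℕ) F) (MvPolynomial (Fin 2 × ℕ) F))
    (A : MvPolynomial (Fin 2 × ℕ) F) : Set (MvPolynomial (Fin 2 × ℕ) F) :=
  {f | ∃ m : ℕ, sepX A ^ m * f ∈ diffIdeal dxy A}

variable (F)

/-- `(u, P₁, Q₁, P₂, Q₂)` is a differential rational parametrization of the differential
curve `(C, A)`. -/
def IsParam (D : Derivation ℤ E E)
    (dxy : Derivation ℤ (MvPolynomial (Fin 2 × ℕ) F) (MvPolynomial (Fin 2 × ℕ) F))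
    (A : MvPolynomial (Fin 2 × ℕ) F) (u : E) (P₁ Q₁ P₂ Q₂ : MvPolynomial ℕ F) : Prop :=
  DiffTrans F D u ∧
  P₁ ≠ 0 ∧ Q₁ ≠ 0 ∧ IsRelPrime P₁ Q₁ ∧ P₂ ≠ 0 ∧ Q₂ ≠ 0 ∧ IsRelPrime P₂ Q₂ ∧
  ¬ (evalD F D u P₁ / evalD F D u Q₁ ∈ (algebraMap F E).range ∧
     evalD F D u P₂ / evalD F D u Q₂ ∈ (algebraMap F E).range) ∧
  {B : MvPolynomial (Fin 2 × ℕ) F |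
      evalD2 F D (evalD F D u P₁ / evalD F D u Q₁) (evalD F D u P₂ / evalD F D u Q₂) B = 0}
    = satSet dxy A

/-- A proper differential rational parametrization: additionally
`F⟨η₁, η₂⟩ = F⟨u⟩`. -/
def IsProperParam (D : Derivation ℤ E E)
    (dxy : Derivation ℤ (MvPolynomial (Fin 2 × ℕ) F) (MvPolynomial (Fin 2 × ℕ) F))
    (A : MvPolynomial (Fin 2 × ℕ) F) (u : E) (P₁ Q₁ P₂ Q₂ : MvPolynomial ℕ F) : Prop :=
  IsParam F D dxy A u P₁ Q₁ P₂ Q₂ ∧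
  genDF F D {evalD F D u P₁ / evalD F D u Q₁, evalD F D u P₂ / evalD F D u Q₂}
    = genDF F D {u}

/-- The projection `F{x,y,u} → F{x,y}` sending `u_k ↦ 0` and keeping `x_k`, `y_k`. -/
def projXY : MvPolynomial (Fin 3 × ℕ) F →ₐ[F] MvPolynomial (Fin 2 × ℕ) F :=
  aeval fun p => if h : (p.1 : ℕ) < 2 then X ((⟨p.1, h⟩ : Fin 2), p.2) else 0

/-- The `i`-th row polynomial of the differential resultant matrix:
`d^{m₂}f₁, …, f₁, d^{m₁}f₂, …, f₂` where `f₁ = x₀·Q₁ − P₁`, `f₂ = y₀·Q₂ − P₂`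
in `F{x,y,u}`. -/
def resRow (dxyu : Derivation ℤ (MvPolynomial (Fin 3 × ℕ) F) (MvPolynomial (Fin 3 × ℕ) F))
    (P₁ Q₁ P₂ Q₂ : MvPolynomial ℕ F) (m₁ m₂ : ℕ) (i : ℕ) : MvPolynomial (Fin 3 × ℕ) F :=
  if i ≤ m₂ then
    (⇑dxyu)^[m₂ - i] (X ((0 : Fin 3), 0) * rename (fun k => ((2 : Fin 3), k)) Q₁
      - rename (fun k => ((2 : Fin 3), k)) P₁)
  else
    (⇑dxyu)^[m₁ + m₂ + 1 - i] (X ((1 : Fin 3), 0) * rename (fun k => ((2 : Fin 3), k)) Q₂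
      - rename (fun k => ((2 : Fin 3), k)) P₂)

/-- The differential resultant `δ-Res(f₁, f₂) ∈ F{x,y}`: the determinant of the
`(m₁+m₂+2) × (m₁+m₂+2)` matrix whose rows are the coefficient vectors of
`d^{m₂}f₁, …, f₁, d^{m₁}f₂, …, f₂` w.r.t. `u_{m₁+m₂}, …, u_1, u_0, 1`. -/
def deltaRes (dxyu : Derivation ℤ (MvPolynomial (Fin 3 × ℕ) F) (MvPolynomial (Fin 3 × ℕ) F))
    (P₁ Q₁ P₂ Q₂ : MvPolynomial ℕ F) (m₁ m₂ : ℕ) : MvPolynomial (Fin 2 × ℕ) F :=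
  Matrix.det (Matrix.of fun i j : Fin (m₁ + m₂ + 2) =>
    if (j : ℕ) ≤ m₁ + m₂ then
      projXY F (pderiv ((2 : Fin 3), m₁ + m₂ - (j : ℕ)) (resRow F dxyu P₁ Q₁ P₂ Q₂ m₁ m₂ i))
    else projXY F (resRow F dxyu P₁ Q₁ P₂ Q₂ m₁ m₂ i))

/-- A linear homogeneous differential polynomial `L = Σ_k a_k u_k` in `F{u}`. -/
def IsLinHom {F : Type*} [Field F] (L : MvPolynomial ℕ F) : Prop :=
  ∀ m ∈ L.support, ∃ k : ℕ, m = Finsupp.single k 1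

/-! ### Coprime polynomials and partial derivatives -/

theorem notMem_vars_of_pderiv {F : Type*} [Field F] [CharZero F] {m : ℕ} {Q : MvPolynomial ℕ F}
    (h : pderiv m Q = 0) : m ∉ Q.vars := by
  intro hm
  obtain ⟨d, hd, hdm⟩ := (mem_vars_iff_mem_support m).1 hm
  have hle : Finsupp.single m 1 ≤ d := by
    rw [Finsupp.single_le_iff]
    exact Nat.one_le_iff_ne_zero.2 (Finsupp.mem_support_iff.1 hdm)
  have h1 := coeff_pderiv (i := m) Q (d - Finsupp.single m 1)
  rw [h, tsub_add_cancel_of_le hle, coeff_zero, eq_comm, mul_eq_zero] at h1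
  rcases h1 with h1 | h1
  · exact mem_support_iff.1 hd h1
  · exact Nat.cast_add_one_ne_zero _ h1

/-- Taking a partial derivative lowers the degree in the variable, so only the zero derivative can
be a multiple of the polynomial itself. -/
theorem pderiv_eq_zero_of_dvd {F : Type*} [Field F] {m : ℕ} {Q : MvPolynomial ℕ F}
    (h : Q ∣ pderiv m Q) : pderiv m Q = 0 := by
  by_contra h0
  obtain ⟨c, hc⟩ := h
  have hQ : Q ≠ 0 := by rintro rfl; simp at h0
  have hc0 : c ≠ 0 := by rintro rfl; exact h0 (by simpa using hc)
  have hlt : ∀ d ∈ (pderiv m Q).support, d m < degreeOf m Q := by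
    intro d hd
    rw [mem_support_iff, coeff_pderiv] at hd
    have := monomial_le_degreeOf m (mem_support_iff.2 (left_ne_zero_of_mul hd))
    simpa using this
  obtain ⟨d, hd⟩ := support_nonempty.2 h0
  have h1 := (degreeOf_lt_iff (n := m) (f := pderiv m Q) ((Nat.zero_le _).trans_lt (hlt d hd))).2 hlt
  rw [hc, degreeOf_mul_eq hQ hc0] at h1
  omega

/-- The numerator of the partial derivative of `P / Q` with respect to `u_m` does not vanish if
`u_m` occurs in the reduced fraction `P / Q`. -/
theorem wronskian_ne_zero {F : Type*} [Field F] [CharZero F] {m : ℕ} {P Q : MvPolynomial ℕ F}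
    (hPQ : IsRelPrime P Q) (hm : m ∈ P.vars ∨ m ∈ Q.vars) :
    pderiv m P * Q - P * pderiv m Q ≠ 0 := by
  intro h
  rw [sub_eq_zero] at h
  have hQ : Q ∣ pderiv m Q := hPQ.symm.dvd_of_dvd_mul_left (h ▸ Dvd.intro_left _ rfl)
  have hP : P ∣ pderiv m P := hPQ.dvd_of_dvd_mul_right (h ▸ Dvd.intro _ rfl)
  exact hm.elim (notMem_vars_of_pderiv (pderiv_eq_zero_of_dvd hP))
    (notMem_vars_of_pderiv (pderiv_eq_zero_of_dvd hQ))

/-! ### Exchange of transcendence bases -/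

open IntermediateField in
/-- If `w` is obtained from an algebraically independent sequence `u` by a triangular change which
is algebraically invertible at each step, then `w` is algebraically independent and has the same
algebraic span as `u`. The argument is carried out in the matroid of algebraic dependence. -/
theorem triangular {F E : Type*} [Field F] [Field E] [Algebra F E] {u w : ℕ → E}
    (hu : AlgebraicIndependent F u)
    (hw : ∀ n, w n ∈ adjoin F (u '' Set.Iio (n + 1)))
    (hs : ∀ n, IsAlgebraic (adjoin F (insert (w n) (u '' Set.Iio n))) (u n)) :
    AlgebraicIndependent F w ∧ ∀ n, IsAlgebraic (adjoin F (Set.range w)) (u n) := by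
  set M := AlgebraicIndependent.matroid F E with hM
  have mem (s : Set E) (a : E) : a ∈ M.closure s ↔ IsAlgebraic (adjoin F s) a := by
    have : a ∈ (M.closure s : Set E) ↔ IsAlgebraic (Algebra.adjoin F s) a := by
      rw [AlgebraicIndependent.matroid_closure_eq]; rfl
    rw [this, isAlgebraic_adjoin_iff]
  have hunot (n : ℕ) : u n ∉ M.closure (u '' Set.Iio n) := by
    rw [mem, isAlgebraic_adjoin_iff]
    exact hu.transcendental_adjoin (by simp)
  have hwmem (s : Set E) (a : E) (h : a ∈ adjoin F s) : a ∈ M.closure s :=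
    (mem _ _).2 (isAlgebraic_algebraMap (⟨a, h⟩ : adjoin F s))
  -- the exchange property: `w n` is not algebraic over `u 0, …, u (n - 1)`
  have hwnot (n : ℕ) : w n ∉ M.closure (u '' Set.Iio n) := by
    intro h
    refine hunot n ?_
    have := (mem _ _).2 (hs n)
    rwa [M.closure_insert_eq_of_mem_closure h] at this
  have hsub (n : ℕ) : w '' Set.Iio n ⊆ M.closure (u '' Set.Iio n) := by
    rintro _ ⟨i, hi, rfl⟩
    exact M.closure_subset_closure (Set.image_mono (Set.Iio_subset_Iio (Nat.succ_le_of_lt hi)))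
      (hwmem _ _ (hw i))
  have hind (n : ℕ) : AlgebraicIndepOn F w (Set.Iio n) := by
    induction n with
    | zero =>
      have : IsEmpty (Set.Iio 0) := by simp
      exact (algebraicIndependent_empty_type_iff).2 (algebraMap F E).injective
    | succ n ih =>
      rw [show Set.Iio (n + 1) = insert n (Set.Iio n) by ext; simp]
      refine (AlgebraicIndepOn.insert_iff (by simp)).2 ⟨ih, ?_⟩
      intro h
      rw [← isAlgebraic_adjoin_iff, ← mem] at h
      exact hwnot n (M.closure_subset_closure_of_subset_closure (hsub n) h)
  refine ⟨?_, fun n => ?_⟩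
  -- algebraic independence involves finitely many indices at a time, so initial segments suffice
  · refine algebraicIndependent_of_finite_type' (algebraMap F E).injective fun t ht _ i hi => ?_
    obtain ⟨N, hN⟩ := ht.bddAbove
    have h1 := (hind (max N i + 1)).transcendental_adjoin
      (s := Subtype.val ⁻¹' t) (i := ⟨i, by simp⟩) (by simpa using hi)
    have himg : w '' t = (fun j : Set.Iio (max N i + 1) => w j) '' (Subtype.val ⁻¹' t) := by
      ext x
      constructor
      · rintro ⟨j, hj, rfl⟩
        exact ⟨⟨j, by have := hN hj; simp; omega⟩, hj, rfl⟩
      · rintro ⟨j, hj, rfl⟩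
        exact ⟨_, hj, rfl⟩
    rw [himg]
    exact h1
  · rw [← mem]
    induction n using Nat.strong_induction_on with
    | _ n ih =>
      refine M.closure_subset_closure_of_subset_closure ?_ ((mem _ _).2 (hs n))
      rintro _ (rfl | ⟨i, hi, rfl⟩)
      · exact hwmem _ _ (subset_adjoin _ _ ⟨n, rfl⟩)
      · exact ih i hi

open IntermediateField in
/-- Splitting off part of a transcendence basis: if `x` and `y` together form a transcendence basis
of `L` over `F` (up to `y` lying in `L`), then `x` is one of `L(y)` over `F(y)`. -/
theorem basis_of_sum {F E ι κ : Type*} [Field F] [Field E] [Algebra F E] {x : ι → E} {y : κ → E}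
    (h : AlgebraicIndependent F (Sum.elim x y)) (L : IntermediateField F E)
    (hx : ∀ i, x i ∈ L) (hL : ∀ a ∈ L, IsAlgebraic (adjoin F (Set.range (Sum.elim x y))) a) :
    ∃ x' : ι → adjoin (adjoin F (Set.range y)) (L : Set E),
      IsTranscendenceBasis (adjoin F (Set.range y)) x' := by
  set K := adjoin F (Set.range y) with hK
  have hxK : AlgebraicIndependent K x := by
    rw [algebraicIndependent_adjoin_iff]
    exact (AlgebraicIndependent.sumElim_iff.1 h).2
  set L' := adjoin K (L : Set E) with hL'
  refine ⟨fun i => ⟨x i, subset_adjoin _ _ (hx i)⟩, ?_⟩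
  have hind : AlgebraicIndependent K (fun i => (⟨x i, subset_adjoin _ _ (hx i)⟩ : L')) :=
    AlgebraicIndependent.of_comp L'.val hxK
  rw [isTranscendenceBasis_iff_algebraicIndependent_isAlgebraic]
  refine ⟨hind, ?_⟩
  have hcl : L' ≤ (algebraicClosure (adjoin K (Set.range x)) E).restrictScalars K := by
    refine adjoin_le_iff.2 fun a ha => ?_
    change a ∈ algebraicClosure (adjoin K (Set.range x)) E
    rw [mem_algebraicClosure_iff]
    have hle : adjoin F (Set.range (Sum.elim x y)) ≤
        (adjoin K (Set.range x)).restrictScalars F := by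
      rw [adjoin_le_iff, Set.Sum.elim_range]
      rintro _ (h | h)
      · exact subset_adjoin K _ h
      · exact _root_.algebraMap_mem (adjoin K (Set.range x)) (⟨_, subset_adjoin F _ h⟩ : K)
    exact IsAlgebraic.tower_top_of_subalgebra_le
      (B := ((adjoin K (Set.range x)).restrictScalars F).toSubalgebra) hle (hL a ha)
  set S := Algebra.adjoin K
    (Set.range fun i => (⟨x i, subset_adjoin _ _ (hx i)⟩ : L')) with hS
  have hmap : S.map L'.val = Algebra.adjoin K (Set.range x) := by
    rw [hS, AlgHom.map_adjoin, ← Set.range_comp]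
    rfl
  refine ⟨fun a => ?_⟩
  have ha : IsAlgebraic (S.map L'.val) (L'.val a) := by
    rw [hmap, ← isAlgebraic_adjoin_iff]
    exact mem_algebraicClosure_iff.1 (hcl a.2)
  exact ha.of_ringHom_of_comp_eq (S.equivMapOfInjective L'.val L'.val.injective) L'.val
    (S.equivMapOfInjective L'.val L'.val.injective).surjective L'.val.injective rfl

/-! ### Derivatives of differential polynomials and of the quotient -/

section Jets

variable {F E : Type*} [Field F] [Field E] [Algebra F E]

/-- The field `F(u, Du, …, D^(n-1) u)` generated by the derivatives of `u` of order less
than `n`. -/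
def jet (F : Type*) {E : Type*} [Field F] [Field E] [Algebra F E]
    (D : Derivation ℤ E E) (u : E) (n : ℕ) : IntermediateField F E :=
  IntermediateField.adjoin F ((fun k => (⇑D)^[k] u) '' Set.Iio n)

theorem iter_mem_jet (D : Derivation ℤ E E) (u : E) {k n : ℕ} (h : k < n) :
    (⇑D)^[k] u ∈ jet F D u n :=
  IntermediateField.subset_adjoin _ _ ⟨k, h, rfl⟩

theorem jet_mono (D : Derivation ℤ E E) (u : E) {k n : ℕ} (h : k ≤ n) :
    jet F D u k ≤ jet F D u n :=
  IntermediateField.adjoin.mono _ _ _ (Set.image_mono (Set.Iio_subset_Iio h))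

theorem D_mem_jet {δF : Derivation ℤ F F} {D : Derivation ℤ E E}
    (hD : ∀ a : F, D (algebraMap F E a) = algebraMap F E (δF a)) (u : E) {n : ℕ} {a : E}
    (ha : a ∈ jet F D u n) : D a ∈ jet F D u (n + 1) := by
  have hle : jet F D u n ≤ jet F D u (n + 1) := jet_mono D u n.le_succ
  induction ha using IntermediateField.adjoin_induction with
  | mem x hx =>
    obtain ⟨k, hk, rfl⟩ := hx
    change D ((⇑D)^[k] u) ∈ _
    rw [← Function.iterate_succ_apply' (⇑D)]
    exact iter_mem_jet D u (Nat.succ_lt_succ hk)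
  | algebraMap x => rw [hD]; exact IntermediateField.algebraMap_mem _ _
  | add x y _ _ hx hy => rw [map_add]; exact add_mem hx hy
  | inv x hx' hx =>
    rw [Derivation.leibniz_inv]
    exact mul_mem (neg_mem (pow_mem (inv_mem (hle hx')) 2)) hx
  | mul x y hx' hy' hx hy =>
    rw [Derivation.leibniz]
    exact add_mem (mul_mem (hle hx') hy) (mul_mem (hle hy') hx)

theorem evalD_mem_jet (D : Derivation ℤ E E) (u : E) {n : ℕ} {p : MvPolynomial ℕ F}
    (hp : p ∈ supported F (Set.Iio n)) : evalD F D u p ∈ jet F D u n := by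
  have : supported F (Set.Iio n) ≤ (jet F D u n).toSubalgebra.comap (evalD F D u) := by
    refine Algebra.adjoin_le ?_
    rintro _ ⟨k, hk, rfl⟩
    simpa [evalD] using iter_mem_jet D u hk
  exact this hp

/-- Chain rule modulo lower order terms: if `p` has order at most `m`, then the only term of order
`m + 1` in `D (p(u))` is `(∂p/∂u_m)(u) · D^(m+1) u`. -/
theorem D_evalD_sub_mem {δF : Derivation ℤ F F} {D : Derivation ℤ E E}
    (hD : ∀ a : F, D (algebraMap F E a) = algebraMap F E (δF a)) (u : E) {m : ℕ}
    {p : MvPolynomial ℕ F} (hp : p ∈ supported F (Set.Iio (m + 1))) :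
    D (evalD F D u p) - evalD F D u (pderiv m p) * (⇑D)^[m + 1] u ∈ jet F D u (m + 1) := by
  induction hp using Algebra.adjoin_induction with
  | mem x hx =>
    obtain ⟨k, hk, rfl⟩ := hx
    have hk' : k ≤ m := Nat.lt_succ_iff.1 hk
    rcases hk'.eq_or_lt with rfl | hlt
    · simp [evalD, ← Function.iterate_succ_apply' (⇑D)]
    · rw [pderiv_X_of_ne hlt.ne]
      simp only [map_zero, zero_mul, sub_zero]
      simpa [evalD, ← Function.iterate_succ_apply' (⇑D)] using
        iter_mem_jet D u (Nat.succ_lt_succ hlt)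
  | algebraMap a =>
    rw [AlgHom.commutes, hD, algebraMap_eq, pderiv_C]
    simpa using IntermediateField.algebraMap_mem _ _
  | add x y _ _ hx hy =>
    convert! add_mem hx hy using 1
    simp only [map_add]
    ring
  | mul x y hx' hy' hx hy =>
    convert! add_mem (mul_mem (evalD_mem_jet D u hx') hy)
      (mul_mem (evalD_mem_jet D u hy') hx) using 1
    simp only [map_mul, map_add, Derivation.leibniz, smul_eq_mul]
    ring

/-- A differential polynomial of order at most `m` evaluated at `u` is a univariate polynomial
expression in `D^m u` over any field containing the lower derivatives, and the derivative of that
polynomial corresponds to `∂/∂u_m`. -/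
theorem exists_poly (D : Derivation ℤ E E) (u : E) {m : ℕ} (K : IntermediateField F E)
    (hK : jet F D u m ≤ K)
    {p : MvPolynomial ℕ F} (hp : p ∈ supported F (Set.Iio (m + 1))) :
    ∃ f : Polynomial K, Polynomial.aeval ((⇑D)^[m] u) f = evalD F D u p ∧
      Polynomial.aeval ((⇑D)^[m] u) (Polynomial.derivative f) = evalD F D u (pderiv m p) := by
  induction hp using Algebra.adjoin_induction with
  | mem x hx =>
    obtain ⟨k, hk, rfl⟩ := hx
    have hk' : k ≤ m := Nat.lt_succ_iff.1 hk
    rcases hk'.eq_or_lt with rfl | hlt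
    · exact ⟨Polynomial.X, by simp [evalD], by simp⟩
    · refine ⟨Polynomial.C ⟨_, hK (iter_mem_jet D u hlt)⟩, by simp [evalD], ?_⟩
      simp [pderiv_X_of_ne hlt.ne]
  | algebraMap a =>
    refine ⟨Polynomial.C (algebraMap F K a), ?_, ?_⟩
    · rw [AlgHom.commutes, Polynomial.aeval_C]; rfl
    · simp [algebraMap_eq]
  | add x y _ _ hx hy =>
    obtain ⟨f, hf, hf'⟩ := hx
    obtain ⟨g, hg, hg'⟩ := hy
    exact ⟨f + g, by simp [hf, hg], by simp [hf', hg']⟩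
  | mul x y _ _ hx hy =>
    obtain ⟨f, hf, hf'⟩ := hx
    obtain ⟨g, hg, hg'⟩ := hy
    exact ⟨f * g, by simp [hf, hg], by simp [hf, hg, hf', hg']; ring⟩

/-- `D^m u` is a root of `P(T) - R Q(T)`, with `R = P(u)/Q(u)`. This polynomial in `T` is nonzero
because its derivative at `D^m u` is `W(u)/Q(u)`, where `W = ∂P/∂u_m · Q - P · ∂Q/∂u_m`. -/
theorem isAlgebraic_top (D : Derivation ℤ E E) (u : E) {m : ℕ} {P Q : MvPolynomial ℕ F}
    (hP : P ∈ supported F (Set.Iio (m + 1))) (hQ : Q ∈ supported F (Set.Iio (m + 1)))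
    (hQ0 : evalD F D u Q ≠ 0) (hW : evalD F D u (pderiv m P * Q - P * pderiv m Q) ≠ 0)
    (K : IntermediateField F E) (hK : jet F D u m ≤ K)
    (hR : evalD F D u P / evalD F D u Q ∈ K) :
    IsAlgebraic K ((⇑D)^[m] u) := by
  obtain ⟨f, hf, hf'⟩ := exists_poly D u K hK hP
  obtain ⟨g, hg, hg'⟩ := exists_poly D u K hK hQ
  refine ⟨f - Polynomial.C ⟨_, hR⟩ * g, fun h => hW ?_, ?_⟩
  · have h1 := congrArg (fun q => Polynomial.aeval ((⇑D)^[m] u) (Polynomial.derivative q)) h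
    simp [hf', hg'] at h1
    field_simp at h1
    simpa [mul_comm] using h1
  · simp [hf, hg]
    field_simp
    simp

/-- Every derivative `D^(k+1) R` of `R = P(u)/Q(u)` is linear in its highest derivative
`D^(m+k+1) u`, with a nonzero leading coefficient `S` not depending on `k`. -/
theorem iterate_succ_quotient {δF : Derivation ℤ F F} {D : Derivation ℤ E E}
    (hD : ∀ a : F, D (algebraMap F E a) = algebraMap F E (δF a)) (u : E) {m : ℕ}
    {P Q : MvPolynomial ℕ F}
    (hP : P ∈ supported F (Set.Iio (m + 1))) (hQ : Q ∈ supported F (Set.Iio (m + 1)))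
    (hQ0 : evalD F D u Q ≠ 0) (hW : evalD F D u (pderiv m P * Q - P * pderiv m Q) ≠ 0) :
    ∃ S ∈ jet F D u (m + 1), S ≠ 0 ∧ ∀ k, (⇑D)^[k + 1] (evalD F D u P / evalD F D u Q)
      - S * (⇑D)^[m + k + 1] u ∈ jet F D u (m + k + 1) := by
  have hPm := evalD_mem_jet D u hP
  have hQm := evalD_mem_jet D u hQ
  have hpd {p : MvPolynomial ℕ F} (hp : p ∈ supported F (Set.Iio (m + 1))) :
      pderiv m p ∈ supported F (Set.Iio (m + 1)) := by
    induction hp using Algebra.adjoin_induction with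
    | mem x hx =>
      obtain ⟨k, -, rfl⟩ := hx
      rcases eq_or_ne k m with rfl | hne
      · rw [pderiv_X_self]; exact one_mem _
      · rw [pderiv_X_of_ne hne]; exact zero_mem _
    | algebraMap a => rw [algebraMap_eq, pderiv_C]; exact zero_mem _
    | add x y _ _ hx hy => rw [map_add]; exact add_mem hx hy
    | mul x y hx' hy' hx hy => rw [pderiv_mul]; exact add_mem (mul_mem hx hy') (mul_mem hx' hy)
  have hS : evalD F D u (pderiv m P * Q - P * pderiv m Q) / evalD F D u Q ^ 2
      ∈ jet F D u (m + 1) :=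
    div_mem (evalD_mem_jet D u (sub_mem (mul_mem (hpd hP) hQ) (mul_mem hP (hpd hQ))))
      (pow_mem hQm 2)
  refine ⟨_, hS, div_ne_zero hW (pow_ne_zero 2 hQ0), fun k => ?_⟩
  induction k with
  | zero =>
    have h1 := D_evalD_sub_mem hD u hP
    have h2 := D_evalD_sub_mem hD u hQ
    have h3 := div_mem (sub_mem (mul_mem hQm h1) (mul_mem hPm h2)) (pow_mem hQm 2)
    convert! h3 using 1
    simp only [zero_add, Function.iterate_one, add_zero, Derivation.leibniz_div, smul_eq_mul,
      map_sub, map_mul]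
    field_simp
    ring
  | succ k ih =>
    have h1 := D_mem_jet hD u ih
    have h2 := mul_mem (jet_mono D u (by omega) (D_mem_jet hD u hS))
      (iter_mem_jet (F := F) D u (show m + k + 1 < m + k + 1 + 1 by omega))
    generalize evalD F D u (pderiv m P * Q - P * pderiv m Q) / evalD F D u Q ^ 2 = S at *
    convert! add_mem h1 h2 using 1
    rw [Function.iterate_succ_apply', map_sub, Derivation.leibniz, ← add_assoc m k 1,
      Function.iterate_succ_apply' (⇑D) (m + k + 1)]
    simp only [smul_eq_mul]
    ring

end Jets

/-- the transcendence degree of `F⟨u⟩` over `F⟨P(u)/Q(u)⟩` equals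
`m = max(ord P, ord Q)` (expressed as: there is a transcendence basis indexed by `Fin m`). -/
theorem trdeg_over_diff_rational [CharZero F]
    (δF : Derivation ℤ F F) (D : Derivation ℤ E E)
    (hD : ∀ a : F, D (algebraMap F E a) = algebraMap F E (δF a))
    (u : E) (hu : DiffTrans F D u)
    (P Q : MvPolynomial ℕ F) (hP : P ≠ 0) (hQ : Q ≠ 0) (hPQ : IsRelPrime P Q)
    (m : ℕ) (hm : max (ordU P) (ordU Q) = (m : WithBot ℕ)) :
    ∃ x : Fin m → ↥(IntermediateField.adjoin
        (↥(genDF F D {evalD F D u P / evalD F D u Q}))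
        ((genDF F D {u} : IntermediateField F E) : Set E)),
      IsTranscendenceBasis (↥(genDF F D {evalD F D u P / evalD F D u Q})) x := by
  set R := evalD F D u P / evalD F D u Q with hR
  have hinj : Function.Injective (evalD F D u) := hu
  have hQ0 : evalD F D u Q ≠ 0 := (map_ne_zero_iff _ hinj).2 hQ
  have hsupp {p : MvPolynomial ℕ F} (hp : ordU p ≤ (m : WithBot ℕ)) :
      p ∈ supported F (Set.Iio (m + 1)) := by
    rw [mem_supported]
    intro k hk
    exact Nat.lt_succ_of_le (WithBot.coe_le_coe.1 ((Finset.le_max hk).trans hp))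
  have hPs := hsupp (hm ▸ le_max_left _ _)
  have hQs := hsupp (hm ▸ le_max_right _ _)
  have hmem : m ∈ P.vars ∨ m ∈ Q.vars := by
    rcases max_choice (ordU P) (ordU Q) with h | h
    · exact .inl (Finset.mem_of_max (h.symm.trans hm))
    · exact .inr (Finset.mem_of_max (h.symm.trans hm))
  have hW : evalD F D u (pderiv m P * Q - P * pderiv m Q) ≠ 0 :=
    (map_ne_zero_iff _ hinj).2 (wronskian_ne_zero hPQ hmem)
  have hRm : R ∈ jet F D u (m + 1) := div_mem (evalD_mem_jet D u hPs) (evalD_mem_jet D u hQs)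
  obtain ⟨S, hSm, hS0, hS⟩ := iterate_succ_quotient hD u hPs hQs hQ0 hW
  have hRk (k : ℕ) : (⇑D)^[k] R ∈ jet F D u (m + k + 1) := by
    induction k with
    | zero => exact hRm
    | succ k ih =>
      rw [Function.iterate_succ_apply']
      exact D_mem_jet hD u ih
  -- the triangular sequence `u, Du, …, D^(m-1) u, R, DR, D²R, …`
  set w : ℕ → E := fun n => if n < m then (⇑D)^[n] u else (⇑D)^[n - m] R with hw
  have hw1 {n : ℕ} (h : n < m) : w n = (⇑D)^[n] u := if_pos h
  have hw2 (k : ℕ) : w (m + k) = (⇑D)^[k] R := by simp [hw]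
  obtain ⟨hind, halg⟩ := triangular (F := F) (u := fun k => (⇑D)^[k] u) (w := w) hu
    (fun n => by
      rcases lt_or_ge n m with h | h
      · rw [hw1 h]
        exact iter_mem_jet D u n.lt_succ_self
      · obtain ⟨k, rfl⟩ := Nat.exists_eq_add_of_le h
        rw [hw2]
        exact hRk k)
    (fun n => by
      set K := IntermediateField.adjoin F
        (insert (w n) ((fun k => (⇑D)^[k] u) '' Set.Iio n)) with hKdef
      have hK : jet F D u n ≤ K := IntermediateField.adjoin.mono _ _ _ (Set.subset_insert _ _)
      have hwK : w n ∈ K := IntermediateField.subset_adjoin _ _ (Set.mem_insert _ _)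
      rcases lt_or_ge n m with h | h
      · rw [hw1 h] at hwK
        exact isAlgebraic_algebraMap (⟨_, hwK⟩ : K)
      · obtain ⟨k, rfl⟩ := Nat.exists_eq_add_of_le h
        rw [hw2] at hwK
        cases k with
        | zero => exact isAlgebraic_top D u hPs hQs hQ0 hW K hK hwK
        | succ k =>
          have hSK : S ∈ K := hK (jet_mono D u (by omega) hSm)
          have h1 := div_mem (sub_mem hwK (hK (hS k))) hSK
          have h2 : (⇑D)^[m + (k + 1)] u ∈ K := by
            convert! h1 using 1
            rw [sub_sub_cancel, mul_div_cancel_left₀ _ hS0, add_assoc]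
          exact isAlgebraic_algebraMap (⟨_, h2⟩ : K))
  have hsum : (Sum.elim (fun i : Fin m => (⇑D)^[(i : ℕ)] u) fun k : ℕ => (⇑D)^[k] R)
      = w ∘ Sum.elim (fun i : Fin m => (i : ℕ)) (fun k => m + k) := by
    ext (i | k)
    · exact (hw1 i.2).symm
    · exact (hw2 k).symm
  have hrange : Set.range w =
      Set.range (Sum.elim (fun i : Fin m => (⇑D)^[(i : ℕ)] u) fun k : ℕ => (⇑D)^[k] R) := by
    rw [hsum]
    refine (Function.Surjective.range_comp (fun n => ?_) w).symm
    rcases lt_or_ge n m with h | h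
    · exact ⟨.inl ⟨n, h⟩, rfl⟩
    · obtain ⟨k, rfl⟩ := Nat.exists_eq_add_of_le h
      exact ⟨.inr k, rfl⟩
  have hgen (v : E) : genDF F D {v} =
      IntermediateField.adjoin F (Set.range fun k : ℕ => (⇑D)^[k] v) := by
    simp [genDF, Set.range]
  have hkey := basis_of_sum (F := F) (x := fun i : Fin m => (⇑D)^[(i : ℕ)] u)
    (y := fun k : ℕ => (⇑D)^[k] R) (by
      rw [hsum]
      refine hind.comp _ (Function.Injective.sumElim Fin.val_injective
        (add_right_injective m) fun i k => ?_)
      have := i.2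
      omega)
    (genDF F D {u})
    (fun i => hgen u ▸ IntermediateField.subset_adjoin _ _ ⟨i, rfl⟩)
    (fun a ha => by
      rw [← hrange]
      have hle : genDF F D {u} ≤ (algebraicClosure
          (IntermediateField.adjoin F (Set.range w)) E).restrictScalars F := by
        rw [hgen, IntermediateField.adjoin_le_iff]
        rintro _ ⟨k, rfl⟩
        exact mem_algebraicClosure_iff.2 (halg k)
      exact mem_algebraicClosure_iff.1 (hle ha))
  rw [hgen R]
  exact hkey

end DiffCurve
end
end

section
/- Let A ∈ F{x,y} be irreducible with s₁ := ord_x(A) ≥ 0 and s₂ := ord_y(A) ≥ 0, and let (u, P₁, Q₁, P₂, Q₂) be a differential rational parametrization of the differential curve (C,A) such that mᵢ := max(ord Pᵢ, ord Qᵢ) ≥ 0 for i = 1, 2. Then s₁ + m₁ = s₂ + m₂; in particular s₁ ≤ m₂ and s₂ ≤ m₁. -/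
/-!
Since `u` is differentially transcendental, the relations between `η₁` and `η₂` can be studied in
`K = Frac F{u}`, where the derivation `D` and the partial derivatives `∂/∂u_n` are all available and
satisfy `[∂/∂u_{n+1}, D] = ∂/∂u_n`.

As `Pᵢ/Qᵢ` is in lowest terms, `ηᵢ` involves `u_{mᵢ}` effectively and no later variable
(`partial_quotient`). By the commutation rule `D^k ηᵢ` then involves `u_{mᵢ+k}` effectively and no
later variable (`partial_iterate`).

The second ingredient is the description of the elements of low order of the general component: an
element of `sat(A)` of `x`-order at most `s₁` is a multiple of `A` (`dvd_of_mem_satSet`).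

If `s₁ + m₁` and `s₂ + m₂` were different, say `n` is the larger one, then applying `∂/∂u_n` to
`A(η) = 0` would leave a single term (`not_single_variable`): the partial derivative of `A` with
respect to its highest variable in `x` or `y` would vanish at `η`, hence would lie in `sat(A)` and
be divisible by `A`, which is impossible for degree reasons in characteristic `0`.

For `s₁ ≤ m₂`, the `m₁ + m₂ + 2` elements `D^k η₁` (`k ≤ m₂`) and `D^k η₂` (`k ≤ m₁`) lie in
`F(u_0, …, u_{m₁+m₂})`, of transcendence degree `m₁ + m₂ + 1`, so they satisfy a nonzero relation `B`
of `x`-order at most `m₂`. Were `m₂ < s₁`, then `A` would divide `B`, although `x_{s₁}` occurs in `A`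
and not in `B`. The last inequality follows from the other two assertions.
-/

open MvPolynomial

noncomputable section

namespace DiffCurve

variable (F : Type*) {E : Type*} [Field F] [Field E] [Algebra F E]

variable {F}

variable (F)

/-! ### Partial derivatives of polynomials -/

theorem pderiv_ne_zero_of_mem_vars {R σ : Type*} [Field R] [CharZero R] {i : σ}
    {p : MvPolynomial σ R} (h : i ∈ p.vars) : pderiv i p ≠ 0 := by
  classical
  intro h0
  obtain ⟨d, hd, hi⟩ := (mem_vars_iff_mem_support i).1 h
  have hdi : d i ≠ 0 := by simpa using hi
  have h1 := coeff_pderiv (i := i) p (d - Finsupp.single i 1)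
  have h2 : d - Finsupp.single i 1 + Finsupp.single i 1 = d :=
    tsub_add_cancel_of_le (by
      rw [Finsupp.single_le_iff]; omega)
  rw [h0, coeff_zero, h2] at h1
  have h3 : (((d - Finsupp.single i 1 : σ →₀ ℕ) i : ℕ) : R) + 1 ≠ 0 := Nat.cast_add_one_ne_zero _
  exact (mul_ne_zero (mem_support_iff.1 hd) h3) h1.symm

theorem totalDegree_pderiv_lt {R σ : Type*} [Field R] {i : σ}
    {p : MvPolynomial σ R} (h : pderiv i p ≠ 0) : (pderiv i p).totalDegree < p.totalDegree := by
  classical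
  rw [totalDegree, Finset.sup_lt_iff]
  · intro d hd
    have h1 : coeff (d + Finsupp.single i 1) p ≠ 0 := by
      intro h0
      rw [mem_support_iff, coeff_pderiv, h0, zero_mul] at hd
      exact hd rfl
    have h2 := le_totalDegree (mem_support_iff.2 h1)
    rw [Finsupp.sum_add_index' (by simp) (by simp)] at h2
    simp at h2
    exact h2
  · obtain ⟨d, hd⟩ := ne_zero_iff.1 h
    have h1 : coeff (d + Finsupp.single i 1) p ≠ 0 := by
      intro h0
      rw [coeff_pderiv, h0, zero_mul] at hd
      exact hd rfl
    have h2 := le_totalDegree (mem_support_iff.2 h1)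
    rw [Finsupp.sum_add_index' (by simp) (by simp)] at h2
    simp at h2
    simp only [bot_eq_zero]
    omega

/-- For degree reasons, a polynomial divides one of its partial derivatives only if that
derivative vanishes. -/
theorem pderiv_eq_zero_of_dvd_s4 {R σ : Type*} [Field R] {i : σ}
    {p : MvPolynomial σ R} (h : p ∣ pderiv i p) : pderiv i p = 0 := by
  by_contra h0
  obtain ⟨q, hq⟩ := h
  have h1 := totalDegree_pderiv_lt h0
  have hp : p ≠ 0 := by rintro rfl; simp at h0
  have hq0 : q ≠ 0 := by rintro rfl; simp [hq] at h0
  rw [hq, totalDegree_mul_of_isDomain hp hq0] at h1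
  omega

theorem vars_pderiv_subset {R σ : Type*} [Field R] (i : σ) (p : MvPolynomial σ R) :
    (pderiv i p).vars ⊆ p.vars := by
  classical
  intro v hv
  obtain ⟨d, hd, hvd⟩ := (mem_vars_iff_mem_support v).1 hv
  refine (mem_vars_iff_mem_support v).2 ⟨d + Finsupp.single i 1, ?_, ?_⟩
  · rw [mem_support_iff] at hd ⊢
    intro h0
    rw [coeff_pderiv, h0, zero_mul] at hd
    exact hd rfl
  · have : d v ≠ 0 := by simpa using hvd
    simp [this]

/-! ### Derivations of fraction fields -/

/-- A derivation of a domain `B` with values in its fraction field `L` extends to `L`: it amounts to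
the ring homomorphism `b ↦ b + d(b) ε` into the dual numbers over `L`, which sends nonzero elements
to units and hence factors through `L`. -/
theorem exists_derivation_fractionField {B L : Type*} [CommRing B] [IsDomain B] [Field L]
    [Algebra B L] [IsFractionRing B L] (d : Derivation ℤ B L) :
    ∃ D : Derivation ℤ L L, ∀ b, D (algebraMap B L b) = d b := by
  let f : B →+* TrivSqZeroExt L L :=
    { toFun := fun b => TrivSqZeroExt.inl (algebraMap B L b) + TrivSqZeroExt.inr (d b)
      map_one' := by ext <;> simp
      map_zero' := by ext <;> simp
      map_add' := fun a b => by ext <;> simp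
      map_mul' := fun a b => by
        ext
        · simp
        · simp only [Derivation.leibniz, Algebra.smul_def]
          simp
          exact mul_comm _ _ }
  have hf : ∀ y : nonZeroDivisors B, IsUnit (f y) := by
    intro y
    rw [TrivSqZeroExt.isUnit_iff_isUnit_fst]
    simp [f]
  let g : L →+* TrivSqZeroExt L L := IsLocalization.lift hf
  have hg : ∀ b, g (algebraMap B L b) = f b := fun b => IsLocalization.lift_eq hf b
  have hfst : ∀ z, (g z).fst = z := by
    have : ((TrivSqZeroExt.fstHom L L L : TrivSqZeroExt L L →ₐ[L] L) :
        TrivSqZeroExt L L →+* L).comp g = RingHom.id L := by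
      apply IsLocalization.ringHom_ext (nonZeroDivisors B)
      ext b
      simp [hg, f]
    intro z
    exact RingHom.congr_fun this z
  refine ⟨Derivation.mk' ({ toFun := fun z => (g z).snd
                            map_add' := by simp
                            map_smul' := by simp } : L →ₗ[ℤ] L) ?_, ?_⟩
  · intro a b
    have h := congrArg TrivSqZeroExt.snd (map_mul g a b)
    rw [TrivSqZeroExt.snd_mul, hfst, hfst, op_smul_eq_smul] at h
    exact h
  · intro b
    simp [hg, f]

theorem derivation_fractionField_ext {B L : Type*} [CommRing B] [IsDomain B] [Field L]
    [Algebra B L] [IsFractionRing B L] {D₁ D₂ : Derivation ℤ L L}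
    (h : ∀ b, D₁ (algebraMap B L b) = D₂ (algebraMap B L b)) : D₁ = D₂ := by
  ext z
  obtain ⟨a, b, hb, rfl⟩ := IsFractionRing.div_surjective (A := B) z
  rw [Derivation.leibniz_div, Derivation.leibniz_div, h, h]

/-- Chain rule for a derivation that kills the constants, in the case where at most one of the
substituted elements has nonzero derivative. -/
theorem derivation_aeval_of_single {R K σ : Type*} [Field R] [Field K] [Algebra R K]
    (Δ : Derivation ℤ K K) (hΔ : ∀ a : R, Δ (algebraMap R K a) = 0) (f : σ → K)
    (B : MvPolynomial σ R) (v₀ : σ) (h : ∀ v ∈ B.vars, v ≠ v₀ → Δ (f v) = 0) :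
    Δ (aeval f B) = aeval f (pderiv v₀ B) * Δ (f v₀) := by
  classical
  have key : ∀ P : MvPolynomial σ R, ∃ T₀ : Finset σ, ∀ T, T₀ ⊆ T →
      Δ (aeval f P) = ∑ v ∈ T, aeval f (pderiv v P) * Δ (f v) := by
    intro P
    induction P using MvPolynomial.induction_on with
    | C a => exact ⟨∅, fun T _ => by simp [hΔ]⟩
    | add p q hp hq =>
      obtain ⟨T₁, h₁⟩ := hp
      obtain ⟨T₂, h₂⟩ := hq
      refine ⟨T₁ ∪ T₂, fun T hT => ?_⟩
      rw [map_add, map_add, h₁ T (Finset.union_subset_left hT), h₂ T (Finset.union_subset_right hT),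
        ← Finset.sum_add_distrib]
      simp [add_mul]
    | mul_X p n hp =>
      obtain ⟨T₁, h₁⟩ := hp
      refine ⟨insert n T₁, fun T hT => ?_⟩
      have hn : n ∈ T := hT (Finset.mem_insert_self _ _)
      rw [map_mul, aeval_X, Derivation.leibniz, h₁ T ((Finset.subset_insert _ _).trans hT)]
      simp only [Derivation.leibniz, pderiv_X, smul_eq_mul, map_add, map_mul, aeval_X, add_mul,
        Finset.sum_add_distrib, Finset.mul_sum]
      congr 1
      · rw [Finset.sum_eq_single n]
        · simp
        · intro b _ hb
          simp [hb]
        · exact fun h => absurd hn h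
      · exact Finset.sum_congr rfl fun _ _ => by ring
  obtain ⟨T₀, hT₀⟩ := key B
  rw [hT₀ (insert v₀ T₀) (Finset.subset_insert _ _), Finset.sum_eq_single v₀]
  · intro v _ hv
    by_cases hvB : v ∈ B.vars
    · rw [h v hvB hv, mul_zero]
    · rw [pderiv_eq_zero_of_notMem_vars hvB, map_zero, zero_mul]
  · exact fun h => absurd (Finset.mem_insert_self _ _) h

/-! ### Algebraic independence in a finitely generated field -/

/-- A field generated by a set `s` contains no algebraically independent family with more than
`#s` members. -/
theorem encard_le_of_algebraicIndependent {R K ι : Type*} [Field R] [Field K] [Algebra R K]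
    {x : ι → K} (hx : AlgebraicIndependent R x) {s : Set K}
    (h : ∀ i, x i ∈ IntermediateField.adjoin R s) : ENat.card ι ≤ s.encard := by
  have hI : (AlgebraicIndependent.matroid R K).Indep (Set.range x) :=
    AlgebraicIndependent.matroid_indep_iff.2 hx.to_subtype_range
  have hsub : Set.range x ⊆ (AlgebraicIndependent.matroid R K).closure s := by
    rw [AlgebraicIndependent.matroid_closure_eq]
    rintro _ ⟨i, rfl⟩
    obtain ⟨a, ha, b, hb, hab⟩ := IntermediateField.mem_adjoin_iff_div.1 (h i)
    rw [SetLike.mem_coe, Subalgebra.mem_algebraicClosure, hab, div_eq_mul_inv]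
    have h1 : ∀ c ∈ Algebra.adjoin R s, IsAlgebraic (Algebra.adjoin R s) c := fun c hc =>
      isAlgebraic_algebraMap (A := K) (⟨c, hc⟩ : Algebra.adjoin R s)
    exact (h1 a ha).mul (h1 b hb).inv
  have h2 := hI.encard_le_eRk_of_subset hsub
  rw [Matroid.eRk_closure_eq] at h2
  have h3 := h2.trans (Matroid.eRk_le_encard _ _)
  rwa [← Set.image_univ, hx.injective.encard_image, Set.encard_univ] at h3

/-! ### Elements of low order in the general component -/

theorem le_of_mem_vars_ordIdx {R : Type*} [Field R] {i : Fin 2} {A : MvPolynomial (Fin 2 × ℕ) R}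
    {s k : ℕ} (hs : ordIdx i A = (s : WithBot ℕ)) (h : (i, k) ∈ A.vars) : k ≤ s :=
  Finset.le_max_of_eq (by
    rw [Finset.mem_image]
    exact ⟨(i, k), by simp [h], rfl⟩) hs

theorem mem_vars_of_ordIdx {R : Type*} [Field R] {i : Fin 2} {A : MvPolynomial (Fin 2 × ℕ) R}
    {s : ℕ} (hs : ordIdx i A = (s : WithBot ℕ)) : (i, s) ∈ A.vars := by
  have h := Finset.mem_of_max hs
  rw [Finset.mem_image] at h
  obtain ⟨⟨j, k⟩, hv, rfl⟩ := h
  rw [Finset.mem_filter] at hv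
  obtain ⟨hv, rfl⟩ := hv
  exact hv

/-- An element of `sat(A)` whose order in `x` does not exceed that of `A` is divisible by `A`.
In the fraction field `L` of `F{x,y}/(A)` the derivative of `x_s` is forced by `A' = 0`, which gives
the derivation `D = S⁻¹ (S d - d(A) ∂/∂x_s)`, where `S = ∂A/∂x_s`. Sending `x_{s+k}` to `D^k x_s`
and the other variables to their classes yields a homomorphism `F{x,y} → L` that commutes with the
derivations, so it kills `[A]`; on polynomials of order at most `s` in `x` it is the canonical
map, whose kernel is `(A)`. -/
theorem dvd_of_mem_satSet {R : Type*} [Field R] [CharZero R]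
    (δF : Derivation ℤ R R)
    (dxy : Derivation ℤ (MvPolynomial (Fin 2 × ℕ) R) (MvPolynomial (Fin 2 × ℕ) R))
    (hdxyC : ∀ a : R, dxy (C a) = C (δF a))
    (hdxyX : ∀ (i : Fin 2) (k : ℕ), dxy (X (i, k)) = X (i, k + 1))
    {A : MvPolynomial (Fin 2 × ℕ) R} (hA : Irreducible A) {s : ℕ}
    (hs : ordIdx 0 A = (s : WithBot ℕ)) {f : MvPolynomial (Fin 2 × ℕ) R}
    (hf : f ∈ satSet dxy A) (hfs : ∀ k, ((0 : Fin 2), k) ∈ f.vars → k ≤ s) : A ∣ f := by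
  classical
  obtain ⟨m, hm⟩ := hf
  have hsep : sepX A = pderiv ((0 : Fin 2), s) A := by
    unfold sepX
    rw [hs]
    rfl
  rw [hsep] at hm
  set S := pderiv ((0 : Fin 2), s) A with hS
  have hprime : (Ideal.span {A}).IsPrime :=
    (Ideal.span_singleton_prime hA.ne_zero).2 hA.prime
  let B := MvPolynomial (Fin 2 × ℕ) R ⧸ Ideal.span {A}
  obtain ⟨L, _, _, _⟩ : ∃ (L : Type _) (_ : Field L) (_ : Algebra B L), IsFractionRing B L :=
    ⟨FractionRing B, inferInstance, inferInstance, inferInstance⟩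
  let q : MvPolynomial (Fin 2 × ℕ) R →+* B := Ideal.Quotient.mk (Ideal.span {A})
  let ι : MvPolynomial (Fin 2 × ℕ) R →+* L := (algebraMap B L).comp q
  have hq : ∀ g, q g = 0 ↔ A ∣ g := fun g => by
    rw [← Ideal.mem_span_singleton]
    exact Ideal.Quotient.eq_zero_iff_mem
  have hι : ∀ g, ι g = 0 ↔ A ∣ g := fun g => by
    rw [← hq]
    exact IsFractionRing.to_map_eq_zero_iff (R := B) (K := L)
  have hιS : ι S ≠ 0 := fun h =>
    pderiv_ne_zero_of_mem_vars (mem_vars_of_ordIdx hs) (pderiv_eq_zero_of_dvd_s4 ((hι _).1 h))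
  let d' : Derivation ℤ (MvPolynomial (Fin 2 × ℕ) R) (MvPolynomial (Fin 2 × ℕ) R) :=
    S • dxy - (dxy A) • (pderiv ((0 : Fin 2), s)).restrictScalars ℤ
  have hd' : ∀ g, d' g = S * dxy g - dxy A * pderiv ((0 : Fin 2), s) g := fun g => rfl
  have hd'A : ∀ g, q g = 0 → q (d' g) = 0 := by
    intro g hg
    rw [hq] at hg ⊢
    obtain ⟨h, rfl⟩ := hg
    have : d' A = 0 := by rw [hd']; ring
    rw [Derivation.leibniz, this, smul_zero, add_zero]
    exact dvd_mul_right _ _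
  have hqs : Function.Surjective q := Ideal.Quotient.mk_surjective
  let dB : Derivation ℤ B B := Derivation.liftOfSurjective (f := q.toIntAlgHom) hqs hd'A
  have hdB : ∀ g, dB (q g) = q (d' g) := fun g =>
    Derivation.liftOfSurjective_apply (f := q.toIntAlgHom) hqs hd'A g
  obtain ⟨D₀, hD₀⟩ := exists_derivation_fractionField (L := L)
    ((Algebra.linearMap B L).compDer dB)
  let D : Derivation ℤ L L := (ι S)⁻¹ • D₀
  have hD : ∀ g, D (ι g) = (ι S)⁻¹ * ι (d' g) := by
    intro g
    change (ι S)⁻¹ * D₀ (algebraMap B L (q g)) = _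
    rw [hD₀]
    change (ι S)⁻¹ * algebraMap B L (dB (q g)) = _
    rw [hdB]
    rfl
  let x : Fin 2 × ℕ → L := fun v =>
    if v.1 = 0 ∧ s < v.2 then (⇑D)^[v.2 - s] (ι (X (0, s))) else ι (X v)
  let φ : MvPolynomial (Fin 2 × ℕ) R →+* L := eval₂Hom (ι.comp C) x
  have hφC : ∀ a, φ (C a) = ι (C a) := fun a => by simp [φ]
  have hφX : ∀ v, φ (X v) = x v := fun v => by simp [φ]
  have hDord : ∀ v : Fin 2 × ℕ, v ≠ (0, s) → D (ι (X v)) = ι (dxy (X v)) := by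
    intro v hv
    rw [hD, hd', pderiv_X_of_ne hv, mul_zero, sub_zero, map_mul, inv_mul_cancel_left₀ hιS]
  have hcomm : ∀ g, φ (dxy g) = D (φ g) := by
    intro g
    induction g using MvPolynomial.induction_on with
    | C a =>
      rw [hdxyC, hφC, hφC, hD, hd', pderiv_C, mul_zero, sub_zero, map_mul,
        inv_mul_cancel_left₀ hιS, hdxyC]
    | add p r hp hr => simp only [map_add, hp, hr]
    | mul_X p v hp =>
      have hv : φ (dxy (X v)) = D (φ (X v)) := by
        obtain ⟨i, k⟩ := v
        rw [hdxyX, hφX, hφX]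
        by_cases hi : i = 0
        · subst hi
          rcases lt_trichotomy k s with hk | hk | hk
          · have h1 : ¬ (s < k) := by omega
            have h2 : ¬ (s < k + 1) := by omega
            simp only [x, h1, h2, and_false, if_false]
            rw [hDord _ (by simp; omega), hdxyX]
          · subst hk
            simp [x]
          · have h2 : s < k + 1 := by omega
            have h3 : k + 1 - s = (k - s) + 1 := by omega
            simp only [x, hk, h2, and_self, if_true, h3, Function.iterate_succ_apply']
        · simp only [x, hi, false_and, if_false]
          rw [hDord _ (by simp [hi]), hdxyX]
      rw [Derivation.leibniz, map_mul, Derivation.leibniz, ← hp, ← hv]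
      simp
  have hφord : ∀ g : MvPolynomial (Fin 2 × ℕ) R,
      (∀ k, ((0 : Fin 2), k) ∈ g.vars → k ≤ s) → φ g = ι g := by
    intro g hg
    refine hom_congr_vars (f₁ := φ) (f₂ := ι) (by ext a; exact hφC a) ?_ rfl
    rintro ⟨i, k⟩ hv _
    rw [hφX]
    refine if_neg ?_
    rintro ⟨rfl : i = 0, hk : s < k⟩
    exact absurd (hg k hv) (by omega)
  have hφA : φ A = 0 := by
    rw [hφord A fun k hk => le_of_mem_vars_ordIdx hs hk]
    exact (hι A).2 dvd_rfl
  have hker : diffIdeal dxy A ≤ RingHom.ker φ := by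
    refine Ideal.span_le.2 ?_
    rintro _ ⟨k, rfl⟩
    have h : ∀ k, φ ((⇑dxy)^[k] A) = 0 := by
      intro k
      induction k with
      | zero => exact hφA
      | succ k ih => rw [Function.iterate_succ_apply', hcomm, ih, map_zero]
    exact h k
  have h1 : φ (S ^ m * f) = 0 := hker hm
  rw [map_mul, map_pow, hφord S fun k hk => le_of_mem_vars_ordIdx hs (vars_pderiv_subset _ _ hk),
    hφord f hfs] at h1
  exact (hι f).1 ((mul_eq_zero.1 h1).resolve_left (pow_ne_zero _ hιS))

/-! ### The field `F⟨u⟩`, its derivation and the partial derivatives `∂/∂u_n` -/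

section FractionField

set_option linter.unusedSectionVars false

variable {R K : Type*} [Field R] [Field K] [Algebra R K] [Algebra (MvPolynomial ℕ R) K]
  [IsScalarTower R (MvPolynomial ℕ R) K] [IsFractionRing (MvPolynomial ℕ R) K]

/-- The derivation of `F⟨u⟩`. On `F{u}` it is obtained from that of `F{x,y}` by identifying `u_k`
with `x_k` and projecting the `y_k` to `0`. -/
theorem exists_derivation_extending (δF : Derivation ℤ R R)
    (dxy : Derivation ℤ (MvPolynomial (Fin 2 × ℕ) R) (MvPolynomial (Fin 2 × ℕ) R))
    (hdxyC : ∀ a : R, dxy (C a) = C (δF a))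
    (hdxyX : ∀ (i : Fin 2) (k : ℕ), dxy (X (i, k)) = X (i, k + 1)) :
    ∃ D : Derivation ℤ K K, (∀ a : R, D (algebraMap R K a) = algebraMap R K (δF a)) ∧
      ∀ k : ℕ, D (algebraMap (MvPolynomial ℕ R) K (X k)) =
        algebraMap (MvPolynomial ℕ R) K (X (k + 1)) := by
  let r : MvPolynomial ℕ R →ₐ[R] MvPolynomial (Fin 2 × ℕ) R := rename fun k => ((0 : Fin 2), k)
  let π : MvPolynomial (Fin 2 × ℕ) R →ₐ[R] MvPolynomial ℕ R :=
    aeval fun v => if v.1 = 0 then X v.2 else 0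
  have hπr : ∀ p, π (r p) = p := by
    intro p
    have : π.comp r = AlgHom.id R _ := by
      ext k
      simp [π, r]
    exact AlgHom.congr_fun this p
  let d : Derivation ℤ (MvPolynomial ℕ R) (MvPolynomial ℕ R) :=
    Derivation.mk' ({ toFun := fun p => π (dxy (r p))
                      map_add' := by simp
                      map_smul' := by simp } : MvPolynomial ℕ R →ₗ[ℤ] MvPolynomial ℕ R)
      (by intro a b; simp [hπr])
  have hd : ∀ p, d p = π (dxy (r p)) := fun p => rfl
  obtain ⟨D, hD⟩ := exists_derivation_fractionField (L := K)
    ((Algebra.linearMap (MvPolynomial ℕ R) K).compDer d)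
  have hD' : ∀ p, D (algebraMap (MvPolynomial ℕ R) K p) =
    algebraMap (MvPolynomial ℕ R) K (d p) := hD
  refine ⟨D, fun a => ?_, fun k => ?_⟩
  · rw [IsScalarTower.algebraMap_apply R (MvPolynomial ℕ R) K, hD', hd,
      IsScalarTower.algebraMap_apply R (MvPolynomial ℕ R) K]
    simp [r, π, hdxyC, algebraMap_eq]
  · rw [hD', hd]
    simp [r, π, hdxyX]

/-- The partial derivatives `∂/∂u_n` on `F⟨u⟩`. -/
theorem exists_partial (n : ℕ) :
    ∃ Δ : Derivation ℤ K K, ∀ p, Δ (algebraMap (MvPolynomial ℕ R) K p) =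
      algebraMap (MvPolynomial ℕ R) K (pderiv n p) := by
  obtain ⟨Δ, hΔ⟩ := exists_derivation_fractionField (L := K)
    ((Algebra.linearMap (MvPolynomial ℕ R) K).compDer ((pderiv (R := R) n).restrictScalars ℤ))
  exact ⟨Δ, hΔ⟩

/-- Two derivations of `F⟨u⟩` agree as soon as they agree on the constants and on the `u_k`. -/
theorem derivation_ext_of_gens {D₁ D₂ : Derivation ℤ K K}
    (hC : ∀ a : R, D₁ (algebraMap R K a) = D₂ (algebraMap R K a))
    (hX : ∀ k : ℕ, D₁ (algebraMap (MvPolynomial ℕ R) K (X k)) =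
      D₂ (algebraMap (MvPolynomial ℕ R) K (X k))) : D₁ = D₂ := by
  refine derivation_fractionField_ext (B := MvPolynomial ℕ R) fun p => ?_
  induction p using MvPolynomial.induction_on with
  | C a =>
    rw [← algebraMap_eq, ← IsScalarTower.algebraMap_apply]
    exact hC a
  | add p q hp hq => simp only [map_add, hp, hq]
  | mul_X p n hp => simp only [map_mul, Derivation.leibniz, hp, hX]

/-- The commutation rule `[∂/∂u_{n+1}, D] = ∂/∂u_n`. -/
theorem partial_comm (δF : Derivation ℤ R R) {D : Derivation ℤ K K} {Δ : ℕ → Derivation ℤ K K}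
    (hDC : ∀ a : R, D (algebraMap R K a) = algebraMap R K (δF a))
    (hDX : ∀ k : ℕ, D (algebraMap (MvPolynomial ℕ R) K (X k)) =
        algebraMap (MvPolynomial ℕ R) K (X (k + 1)))
    (hΔ : ∀ n p, Δ n (algebraMap (MvPolynomial ℕ R) K p) =
      algebraMap (MvPolynomial ℕ R) K (pderiv n p)) (n : ℕ) (z : K) :
    Δ (n + 1) (D z) = D (Δ (n + 1) z) + Δ n z := by
  have hΔC : ∀ n (a : R), Δ n (algebraMap R K a) = 0 := by
    intro n a
    rw [IsScalarTower.algebraMap_apply R (MvPolynomial ℕ R) K, hΔ, algebraMap_eq, pderiv_C,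
      map_zero]
  have h : ⁅Δ (n + 1), D⁆ = Δ n := by
    apply derivation_ext_of_gens (R := R)
    · intro a
      rw [Derivation.commutator_apply, hDC, hΔC, hΔC, hΔC, map_zero, sub_zero]
    · intro k
      rw [Derivation.commutator_apply, hDX, hΔ, hΔ, hΔ, pderiv_X, pderiv_X, pderiv_X]
      by_cases hk : k = n
      · subst hk
        simp
      · have h0 : D (algebraMap (MvPolynomial ℕ R) K (Pi.single (M := fun _ => MvPolynomial ℕ R) (n + 1) 1 k)) = 0 := by
          by_cases hk' : k = n + 1
          · subst hk'
            simp
          · simp [hk']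
        rw [h0]
        simp [hk]
  rw [← h, Derivation.commutator_apply]
  ring

/-- A quotient `P/Q` in lowest terms depends on `u_m`, `m = max (ord P) (ord Q)`, and on no later
variable: if `∂P/∂u_m · Q = P · ∂Q/∂u_m` then `Q ∣ ∂Q/∂u_m`, so both partial derivatives vanish. -/
theorem partial_quotient [CharZero R] {Δ : ℕ → Derivation ℤ K K}
    (hΔ : ∀ n p, Δ n (algebraMap (MvPolynomial ℕ R) K p) =
      algebraMap (MvPolynomial ℕ R) K (pderiv n p)) {P Q : MvPolynomial ℕ R} (hQ : Q ≠ 0)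
    (hPQ : IsRelPrime P Q) {m : ℕ} (hm : max (ordU P) (ordU Q) = (m : WithBot ℕ)) :
    (∀ n, m < n → Δ n (algebraMap (MvPolynomial ℕ R) K P / algebraMap (MvPolynomial ℕ R) K Q) = 0) ∧
    Δ m (algebraMap (MvPolynomial ℕ R) K P / algebraMap (MvPolynomial ℕ R) K Q) ≠ 0 := by
  have hinj := IsFractionRing.injective (MvPolynomial ℕ R) K
  constructor
  · intro n hn
    have hnot : ∀ p : MvPolynomial ℕ R, ordU p ≤ m → n ∉ p.vars := by
      intro p hp h
      have h1 : ((n : ℕ) : WithBot ℕ) ≤ m := (Finset.le_max h).trans hp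
      have h2 : n ≤ m := by exact_mod_cast h1
      omega
    rw [Derivation.leibniz_div, hΔ, hΔ,
      pderiv_eq_zero_of_notMem_vars (hnot P (hm ▸ le_max_left _ _)),
      pderiv_eq_zero_of_notMem_vars (hnot Q (hm ▸ le_max_right _ _))]
    simp
  · intro h
    have hQ0 : algebraMap (MvPolynomial ℕ R) K Q ≠ 0 := fun h0 =>
      hQ (hinj (by rw [h0, map_zero]))
    rw [Derivation.leibniz_div, hΔ, hΔ] at h
    have h1 : algebraMap (MvPolynomial ℕ R) K (Q * pderiv m P - P * pderiv m Q) = 0 := by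
      have h2 := (mul_eq_zero.1 h).resolve_left (pow_ne_zero _ (inv_ne_zero hQ0))
      simpa using h2
    have h3 : Q * pderiv m P - P * pderiv m Q = 0 := hinj (by rw [h1, map_zero])
    rw [sub_eq_zero] at h3
    have h4 : pderiv m Q = 0 :=
      pderiv_eq_zero_of_dvd_s4 (hPQ.symm.dvd_of_dvd_mul_left (h3 ▸ dvd_mul_right _ _))
    have h5 : pderiv m P = 0 := by
      rw [h4, mul_zero] at h3
      exact (mul_eq_zero.1 h3).resolve_left hQ
    have h6 : ∀ p : MvPolynomial ℕ R, ordU p = m → pderiv m p ≠ 0 := fun p hp =>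
      pderiv_ne_zero_of_mem_vars (Finset.mem_of_max hp)
    rcases max_choice (ordU P) (ordU Q) with hc | hc
    · exact h6 P (hc ▸ hm) h5
    · exact h6 Q (hc ▸ hm) h4

/-! ### The filtration of `F⟨u⟩` by the subfields `F(u_0, …, u_n)` -/

/-- `F(u_0, …, u_n)` as a subfield of `F⟨u⟩`. -/
def truncField (R K : Type*) [Field R] [Field K] [Algebra R K] [Algebra (MvPolynomial ℕ R) K]
    (n : ℕ) : IntermediateField R K :=
  IntermediateField.adjoin R ((fun k => algebraMap (MvPolynomial ℕ R) K (X k)) '' Set.Iic n)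

theorem truncField_mono {n m : ℕ} (h : n ≤ m) : truncField R K n ≤ truncField R K m :=
  IntermediateField.adjoin.mono _ _ _ (Set.image_mono (Set.Iic_subset_Iic.2 h))

theorem algebraMap_mem_truncField {P : MvPolynomial ℕ R} {m : ℕ} (h : ordU P ≤ m) :
    algebraMap (MvPolynomial ℕ R) K P ∈ truncField R K m := by
  have hP : P ∈ Algebra.adjoin R ((X : ℕ → MvPolynomial ℕ R) '' Set.Iic m) := by
    rw [← supported_eq_adjoin_X, mem_supported]
    intro n hn
    have h1 : ((n : ℕ) : WithBot ℕ) ≤ m := (Finset.le_max hn).trans h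
    exact_mod_cast h1
  clear h
  induction hP using Algebra.adjoin_induction with
  | mem x hx =>
    obtain ⟨k, hk, rfl⟩ := hx
    exact IntermediateField.subset_adjoin _ _ ⟨k, hk, rfl⟩
  | algebraMap r =>
    rw [← IsScalarTower.algebraMap_apply]
    exact (truncField R K m).algebraMap_mem r
  | add x y _ _ hx hy =>
    rw [map_add]
    exact add_mem hx hy
  | mul x y _ _ hx hy =>
    rw [map_mul]
    exact mul_mem hx hy

theorem derivation_mem_truncField (δF : Derivation ℤ R R) {D : Derivation ℤ K K}
    (hDC : ∀ a : R, D (algebraMap R K a) = algebraMap R K (δF a))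
    (hDX : ∀ k : ℕ, D (algebraMap (MvPolynomial ℕ R) K (X k)) =
        algebraMap (MvPolynomial ℕ R) K (X (k + 1))) {n : ℕ} {z : K}
    (hz : z ∈ truncField R K n) : D z ∈ truncField R K (n + 1) := by
  have hle := truncField_mono (R := R) (K := K) (Nat.le_succ n)
  induction hz using IntermediateField.adjoin_induction with
  | mem x hx =>
    obtain ⟨k, hk, rfl⟩ := hx
    rw [hDX]
    exact IntermediateField.subset_adjoin _ _ ⟨k + 1, Nat.succ_le_succ hk, rfl⟩
  | algebraMap r =>
    rw [hDC]
    exact (truncField R K (n + 1)).algebraMap_mem _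
  | add x y _ _ hx hy =>
    rw [map_add]
    exact add_mem hx hy
  | inv x hx hDx =>
    rw [Derivation.leibniz_inv]
    exact mul_mem (neg_mem (pow_mem (inv_mem (hle hx)) 2)) hDx
  | mul x y hx hy hDx hDy =>
    rw [Derivation.leibniz]
    exact add_mem (mul_mem (hle hx) hDy) (mul_mem (hle hy) hDx)

theorem iterate_mem_truncField (δF : Derivation ℤ R R) {D : Derivation ℤ K K}
    (hDC : ∀ a : R, D (algebraMap R K a) = algebraMap R K (δF a))
    (hDX : ∀ k : ℕ, D (algebraMap (MvPolynomial ℕ R) K (X k)) =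
        algebraMap (MvPolynomial ℕ R) K (X (k + 1))) {n : ℕ} {z : K}
    (hz : z ∈ truncField R K n) (k : ℕ) : (⇑D)^[k] z ∈ truncField R K (n + k) := by
  induction k with
  | zero => exact hz
  | succ k ih =>
    rw [Function.iterate_succ_apply']
    exact derivation_mem_truncField δF hDC hDX ih

end FractionField

/-! ### Orders of derivatives and of the terms of a relation -/

/-- If `η` has order `m` in `u`, then `D^k η` has order `m + k`, with the same leading partial
derivative. -/
theorem partial_iterate {K : Type*} [Field K] {D : Derivation ℤ K K} {Δ : ℕ → Derivation ℤ K K}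
    (hcomm : ∀ n z, Δ (n + 1) (D z) = D (Δ (n + 1) z) + Δ n z) {η : K} {m : ℕ}
    (h : ∀ n, m < n → Δ n η = 0) (k : ℕ) :
    (∀ n, m + k < n → Δ n ((⇑D)^[k] η) = 0) ∧ Δ (m + k) ((⇑D)^[k] η) = Δ m η := by
  induction k with
  | zero => exact ⟨h, rfl⟩
  | succ k ih =>
    obtain ⟨h1, h2⟩ := ih
    constructor
    · intro n hn
      obtain ⟨n, rfl⟩ : ∃ n', n = n' + 1 := ⟨n - 1, by omega⟩
      rw [Function.iterate_succ_apply', hcomm, h1 _ (by omega), h1 _ (by omega), map_zero, add_zero]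
    · rw [Function.iterate_succ_apply', ← add_assoc, hcomm, h1 _ (by omega), h2, map_zero, zero_add]

/-- In a relation `A(f) = 0` no variable `v₀` can be the only one of `A` whose value has nonzero
`Δ`-derivative: otherwise `∂A/∂v₀` vanishes at `f`, and `A` would divide its own nonzero
derivative. -/
theorem not_single_variable {R K σ : Type*} [Field R] [CharZero R] [Field K] [Algebra R K]
    {Δ : Derivation ℤ K K} (hΔ : ∀ a : R, Δ (algebraMap R K a) = 0) {f : σ → K}
    {A : MvPolynomial σ R} (hAf : aeval f A = 0) {v₀ : σ} (hv₀ : v₀ ∈ A.vars)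
    (hdvd : aeval f (pderiv v₀ A) = 0 → A ∣ pderiv v₀ A)
    (h : ∀ v ∈ A.vars, v ≠ v₀ → Δ (f v) = 0) : Δ (f v₀) = 0 := by
  by_contra h0
  have h1 := derivation_aeval_of_single Δ hΔ f A v₀ h
  rw [hAf, map_zero] at h1
  exact pderiv_ne_zero_of_mem_vars hv₀
    (pderiv_eq_zero_of_dvd_s4 (hdvd ((mul_eq_zero.1 h1.symm).resolve_right h0)))

/-- order relation for an arbitrary differential rational parametrization
of `(C, A)`: `ord_x A + m₁ = ord_y A + m₂`, `ord_x A ≤ m₂`, `ord_y A ≤ m₁`. -/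
theorem order_difference_of_param [CharZero F]
    (δF : Derivation ℤ F F) (D : Derivation ℤ E E)
    (hD : ∀ a : F, D (algebraMap F E a) = algebraMap F E (δF a))
    (dxy : Derivation ℤ (MvPolynomial (Fin 2 × ℕ) F) (MvPolynomial (Fin 2 × ℕ) F))
    (hdxyC : ∀ a : F, dxy (C a) = C (δF a))
    (hdxyX : ∀ (i : Fin 2) (k : ℕ), dxy (X (i, k)) = X (i, k + 1))
    (A : MvPolynomial (Fin 2 × ℕ) F) (hA : Irreducible A)
    (s₁ s₂ : ℕ) (hs₁ : ordIdx 0 A = (s₁ : WithBot ℕ)) (hs₂ : ordIdx 1 A = (s₂ : WithBot ℕ))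
    (u : E) (P₁ Q₁ P₂ Q₂ : MvPolynomial ℕ F)
    (hpar : IsParam F D dxy A u P₁ Q₁ P₂ Q₂)
    (m₁ m₂ : ℕ) (hm₁ : max (ordU P₁) (ordU Q₁) = (m₁ : WithBot ℕ))
    (hm₂ : max (ordU P₂) (ordU Q₂) = (m₂ : WithBot ℕ)) :
    s₁ + m₁ = s₂ + m₂ ∧ s₁ ≤ m₂ ∧ s₂ ≤ m₁ := by
  classical
  obtain ⟨hu, -, hQ₁, hPQ₁, -, hQ₂, hPQ₂, -, hI⟩ := hpar
  obtain ⟨K, _, _, _, _, _⟩ : ∃ (K : Type _) (_ : Field K) (_ : Algebra F K)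
      (_ : Algebra (MvPolynomial ℕ F) K) (_ : IsScalarTower F (MvPolynomial ℕ F) K),
      IsFractionRing (MvPolynomial ℕ F) K :=
    ⟨FractionRing (MvPolynomial ℕ F), inferInstance, inferInstance, inferInstance, inferInstance,
      inferInstance⟩
  obtain ⟨d, hdC, hdX⟩ := exists_derivation_extending (K := K) δF dxy hdxyC hdxyX
  choose Δ hΔ using exists_partial (R := F) (K := K)
  have hΔC : ∀ n (a : F), Δ n (algebraMap F K a) = 0 := by
    intro n a
    rw [IsScalarTower.algebraMap_apply F (MvPolynomial ℕ F) K, hΔ, algebraMap_eq, pderiv_C,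
      map_zero]
  have hcomm := partial_comm δF hdC hdX hΔ
  -- The differential embedding of `F⟨u⟩` in `E`.
  have hinj : Function.Injective (evalD F D u) := hu
  let j : K →ₐ[F] E := IsFractionRing.liftAlgHom hinj
  have hj : ∀ p, j (algebraMap (MvPolynomial ℕ F) K p) = evalD F D u p := fun p =>
    IsFractionRing.lift_algebraMap hinj p
  have hjd : ∀ z, j (d z) = D (j z) := by
    have hp : ∀ p, j (d (algebraMap (MvPolynomial ℕ F) K p)) =
        D (j (algebraMap (MvPolynomial ℕ F) K p)) := by
      intro p
      induction p using MvPolynomial.induction_on with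
      | C a =>
        rw [← algebraMap_eq, ← IsScalarTower.algebraMap_apply, hdC, j.commutes, j.commutes, hD]
      | add p q hp hq => simp only [map_add, hp, hq]
      | mul_X p n hp =>
        have hX : j (d (algebraMap (MvPolynomial ℕ F) K (X n))) =
            D (j (algebraMap (MvPolynomial ℕ F) K (X n))) := by
          rw [hdX, hj, hj]
          simp [evalD, Function.iterate_succ_apply']
        simp only [map_mul, Derivation.leibniz, map_add, smul_eq_mul, hp, hX]
    intro z
    obtain ⟨a, b, hb, rfl⟩ := IsFractionRing.div_surjective (A := MvPolynomial ℕ F) z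
    rw [Derivation.leibniz_div, map_div₀, Derivation.leibniz_div, ← hp, ← hp]
    simp
  have hjit : ∀ k z, j ((⇑d)^[k] z) = (⇑D)^[k] (j z) := by
    intro k z
    induction k with
    | zero => rfl
    | succ k ih => rw [Function.iterate_succ_apply', Function.iterate_succ_apply', hjd, ih]
  set η₁ : K := algebraMap (MvPolynomial ℕ F) K P₁ / algebraMap (MvPolynomial ℕ F) K Q₁ with hη₁
  set η₂ : K := algebraMap (MvPolynomial ℕ F) K P₂ / algebraMap (MvPolynomial ℕ F) K Q₂ with hη₂
  have hjη₁ : j η₁ = evalD F D u P₁ / evalD F D u Q₁ := by rw [hη₁, map_div₀, hj, hj]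
  have hjη₂ : j η₂ = evalD F D u P₂ / evalD F D u Q₂ := by rw [hη₂, map_div₀, hj, hj]
  let f : Fin 2 × ℕ → K := fun v => (⇑d)^[v.2] (if v.1 = 0 then η₁ else η₂)
  have hf0 : ∀ k, f (0, k) = (⇑d)^[k] η₁ := fun k => rfl
  have hf1 : ∀ k, f (1, k) = (⇑d)^[k] η₂ := fun k => rfl
  have hsat : ∀ B, aeval f B = 0 ↔ B ∈ satSet dxy A := by
    intro B
    rw [← hI, Set.mem_ofPred_eq, ← hjη₁, ← hjη₂]
    have : evalD2 F D (j η₁) (j η₂) B = j (aeval f B) := by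
      have h : evalD2 F D (j η₁) (j η₂) = j.comp (aeval f) := by
        ext v
        simp only [evalD2, aeval_X, AlgHom.comp_apply, f, hjit]
        split_ifs <;> rfl
      rw [h]
      rfl
    rw [this]
    exact (map_eq_zero j).symm
  have hAf : aeval f A = 0 := (hsat A).2 ⟨0, by
    rw [pow_zero, one_mul]
    exact Ideal.subset_span ⟨0, rfl⟩⟩
  have hdvd : ∀ v, aeval f (pderiv v A) = 0 → A ∣ pderiv v A := fun v hv =>
    dvd_of_mem_satSet δF dxy hdxyC hdxyX hA hs₁ ((hsat _).1 hv) fun k hk =>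
      le_of_mem_vars_ordIdx hs₁ (vars_pderiv_subset _ _ hk)
  obtain ⟨hz₁, hnz₁⟩ := partial_quotient hΔ hQ₁ hPQ₁ hm₁
  obtain ⟨hz₂, hnz₂⟩ := partial_quotient hΔ hQ₂ hPQ₂ hm₂
  have hit₁ := partial_iterate hcomm hz₁
  have hit₂ := partial_iterate hcomm hz₂
  -- If the sums differ, `∂/∂u_n` with `n` the larger one is nonzero on the highest derivative of one
  -- of `η₁, η₂` occurring in `A`, and zero on every other one that occurs.
  have heq : s₁ + m₁ = s₂ + m₂ := by
    rcases lt_trichotomy (s₁ + m₁) (s₂ + m₂) with hlt | heq | hlt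
    · exfalso
      refine hnz₂ ?_
      rw [← (hit₂ s₂).2, ← hf1]
      refine not_single_variable (hΔC _) hAf (mem_vars_of_ordIdx hs₂) (hdvd _) ?_
      rintro ⟨i, k⟩ hv hne
      fin_cases i
      · have := le_of_mem_vars_ordIdx hs₁ hv
        exact (hit₁ k).1 _ (by omega)
      · have hk := le_of_mem_vars_ordIdx hs₂ hv
        have hk' : k ≠ s₂ := by
          rintro rfl
          exact hne rfl
        exact (hit₂ k).1 _ (by omega)
    · exact heq
    · exfalso
      refine hnz₁ ?_
      rw [← (hit₁ s₁).2, ← hf0]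
      refine not_single_variable (hΔC _) hAf (mem_vars_of_ordIdx hs₁) (hdvd _) ?_
      rintro ⟨i, k⟩ hv hne
      fin_cases i
      · have hk := le_of_mem_vars_ordIdx hs₁ hv
        have hk' : k ≠ s₁ := by
          rintro rfl
          exact hne rfl
        exact (hit₁ k).1 _ (by omega)
      · have := le_of_mem_vars_ordIdx hs₂ hv
        exact (hit₂ k).1 _ (by omega)
  have hle : s₁ ≤ m₂ := by
    by_contra! hlt
    -- `η₁, …, η₁^(m₂), η₂, …, η₂^(m₁)` are `m₁ + m₂ + 2` elements of `F(u_0, …, u_{m₁+m₂})`.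
    let e : Fin (m₂ + 1) ⊕ Fin (m₁ + 1) → Fin 2 × ℕ :=
      Sum.elim (fun k => (0, (k : ℕ))) fun k => (1, (k : ℕ))
    have he : Function.Injective e := by
      rintro (a | a) (b | b) hab <;> simp [e, Fin.ext_iff] at hab ⊢ <;> exact hab
    have hmem₁ : η₁ ∈ truncField F K m₁ :=
      div_mem (algebraMap_mem_truncField (hm₁ ▸ le_max_left _ _))
        (algebraMap_mem_truncField (hm₁ ▸ le_max_right _ _))
    have hmem₂ : η₂ ∈ truncField F K m₂ :=
      div_mem (algebraMap_mem_truncField (hm₂ ▸ le_max_left _ _))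
        (algebraMap_mem_truncField (hm₂ ▸ le_max_right _ _))
    have hmem : ∀ i, (f ∘ e) i ∈ truncField F K (m₁ + m₂) := by
      rintro (k | k)
      · exact truncField_mono (by omega) (iterate_mem_truncField δF hdC hdX hmem₁ k)
      · exact truncField_mono (by omega) (iterate_mem_truncField δF hdC hdX hmem₂ k)
    have hdep : ¬ AlgebraicIndependent F (f ∘ e) := by
      intro h
      have h1 := (encard_le_of_algebraicIndependent h hmem).trans (Set.encard_image_le _ _)
      rw [← Finset.coe_Iic, Set.encard_coe_eq_coe_finsetCard, Nat.card_Iic,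
        ENat.card_eq_coe_fintype_card, Fintype.card_sum, Fintype.card_fin, Fintype.card_fin] at h1
      have h2 : m₂ + 1 + (m₁ + 1) ≤ m₁ + m₂ + 1 := by exact_mod_cast h1
      omega
    -- A relation between them lies in `sat(A)` but does not involve `x_{s₁}`, while `A` divides it.
    rw [algebraicIndependent_iff] at hdep
    push Not at hdep
    obtain ⟨p, hp, hp0⟩ := hdep
    have hB : rename e p ∈ satSet dxy A := by
      rw [← hsat, aeval_rename]
      exact hp
    have hBord : ∀ k, ((0 : Fin 2), k) ∈ (rename e p).vars → k ≤ m₂ := by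
      intro k hk
      obtain ⟨i, -, hi⟩ := Finset.mem_image.1 (vars_rename e p hk)
      rcases i with i | i
      · simp [e] at hi
        omega
      · simp [e] at hi
    obtain ⟨q, hq⟩ := dvd_of_mem_satSet δF dxy hdxyC hdxyX hA hs₁ hB
      fun k hk => (hBord k hk).trans hlt.le
    have hB0 : rename e p ≠ 0 := fun h => hp0 (rename_injective e he (by rw [h, map_zero]))
    have hq0 : q ≠ 0 := by
      rintro rfl
      exact hB0 (by rw [hq, mul_zero])
    have hmv : ((0 : Fin 2), s₁) ∈ (rename e p).vars := by
      have h1 := mem_vars_iff_degreeOf_ne_zero.1 (mem_vars_of_ordIdx hs₁)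
      rw [mem_vars_iff_degreeOf_ne_zero, hq, degreeOf_mul_eq hA.ne_zero hq0]
      omega
    exact absurd (hBord _ hmv) (by omega)
  exact ⟨heq, hle, by omega⟩

end DiffCurve
end
end
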